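/- arXiv:1211.1738 — 3 statements merged into one kernel-verified Lean document; each statement's English description precedes it below -/
import Mathlib

section
/- Let X be a compact metric space, Λ a compact metric space, and w : Λ × X → X a weakly hyperbolic IFS. Then w satisfies Property P*: there exists a map Γ : Ω → X such that for every ε > 0 there exists n₀ ∈ ℕ with d(w_{σ₁…σₙ}(x), Γ(σ)) < ε for all n ≥ n₀, all σ ∈ Ω and all x ∈ X; in particular the limit lim_{n→∞} w_{σ₁…σₙ}(x) exists for every σ and x, is independent of x, and the convergence is uniform in σ and x. -/
open Metric Set Filter Topology

/-- `seqComp w σ n = w_{σ₁} ∘ ⋯ ∘ w_{σₙ}` (with `σ i` denoting `σ_{i+1}`). -/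
def seqComp {Λ X : Type*} (w : Λ → X → X) (σ : ℕ → Λ) : ℕ → X → X
  | 0 => id
  | n + 1 => seqComp w σ n ∘ w (σ n)


theorem seqComp_continuous_aux {Λ X : Type*} [TopologicalSpace Λ] [TopologicalSpace X]
    (w : Λ → X → X) (hw : Continuous fun p : Λ × X => w p.1 p.2) (n : ℕ) :
    Continuous fun p : (ℕ → Λ) × X => seqComp w p.1 n p.2 := by
  induction n with
  | zero => exact continuous_snd
  | succ n ih =>
    have h1 : Continuous fun p : (ℕ → Λ) × X => w (p.1 n) p.2 :=
      hw.comp (f := fun p : (ℕ → Λ) × X => (p.1 n, p.2))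
        (((continuous_apply n).comp continuous_fst).prodMk continuous_snd)
    exact ih.comp (continuous_fst.prodMk h1)

theorem seqComp_factor_aux {Λ X : Type*} (w : Λ → X → X) (σ : ℕ → Λ) (n m : ℕ) (h : n ≤ m)
    (x : X) : ∃ y, seqComp w σ m x = seqComp w σ n y := by
  induction m, h using Nat.le_induction generalizing x with
  | base => exact ⟨x, rfl⟩
  | succ m _ ih => exact ih (w (σ m) x)

theorem seqComp_uniform_aux {Λ X : Type*} [MetricSpace Λ] [CompactSpace Λ]
    [MetricSpace X] [CompactSpace X]
    (w : Λ → X → X) (hw : Continuous fun p : Λ × X => w p.1 p.2)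
    (hyp : ∀ σ : ℕ → Λ,
      Tendsto (fun n => diam (Set.range (seqComp w σ n))) atTop (𝓝 0))
    (ε : ℝ) (hε : 0 < ε) :
    ∃ N : ℕ, ∀ σ : ℕ → Λ, ∀ x y : X, dist (seqComp w σ N x) (seqComp w σ N y) < ε := by
  have key : ∃ N : ℕ, ∀ σ ∈ (univ : Set (ℕ → Λ)), ∀ n ≥ N, ∀ x y : X,
      dist (seqComp w σ n x) (seqComp w σ n y) < ε := by
    refine isCompact_univ.induction_on (p := fun S : Set (ℕ → Λ) => ∃ N : ℕ, ∀ σ ∈ S, ∀ n ≥ N,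
      ∀ x y : X, dist (seqComp w σ n x) (seqComp w σ n y) < ε) ?_ ?_ ?_ ?_
    · exact ⟨0, fun σ h => absurd h (notMem_empty σ)⟩
    · rintro s t hst ⟨N, hN⟩
      exact ⟨N, fun σ h => hN σ (hst h)⟩
    · rintro s t ⟨N, hN⟩ ⟨M, hM⟩
      refine ⟨max N M, fun σ h n hn => ?_⟩
      rcases h with h | h
      · exact hN σ h n (le_trans (le_max_left _ _) hn)
      · exact hM σ h n (le_trans (le_max_right _ _) hn)
    · intro σ _
      obtain ⟨N, hN⟩ := ((hyp σ).eventually (gt_mem_nhds hε)).exists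
      have hd : ∀ x y : X, dist (seqComp w σ N x) (seqComp w σ N y) < ε := fun x y =>
        lt_of_le_of_lt (dist_le_diam_of_mem isBounded_of_compactSpace
          (mem_range_self x) (mem_range_self y)) hN
      have hc := seqComp_continuous_aux w hw N
      have hc2 : Continuous fun p : (ℕ → Λ) × (X × X) =>
          dist (seqComp w p.1 N p.2.1) (seqComp w p.1 N p.2.2) :=
        (hc.comp (continuous_fst.prodMk (continuous_fst.comp continuous_snd))).dist
          (hc.comp (continuous_fst.prodMk (continuous_snd.comp continuous_snd)))
      have hev : ∀ᶠ τ in 𝓝 σ, ∀ q ∈ (univ : Set (X × X)),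
          dist (seqComp w τ N q.1) (seqComp w τ N q.2) < ε := by
        refine isCompact_univ.eventually_forall_of_forall_eventually ?_
        intro q _
        exact hc2.continuousAt.eventually (gt_mem_nhds (hd q.1 q.2))
      refine ⟨_, mem_nhdsWithin_of_mem_nhds hev, N, ?_⟩
      intro τ hτ n hn x y
      obtain ⟨x', hx⟩ := seqComp_factor_aux w τ N n hn x
      obtain ⟨y', hy⟩ := seqComp_factor_aux w τ N n hn y
      rw [hx, hy]
      exact hτ (x', y') (mem_univ _)
  obtain ⟨N, hN⟩ := key
  exact ⟨N, fun σ => hN σ (mem_univ _) N le_rfl⟩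

/-- Property P* for weakly hyperbolic IFS on a compact phase space. -/
theorem stmt_1 {Λ X : Type*} [MetricSpace Λ] [CompactSpace Λ]
    [MetricSpace X] [CompactSpace X] [Nonempty X]
    (w : Λ → X → X) (hw : Continuous fun p : Λ × X => w p.1 p.2)
    (hyp : ∀ σ : ℕ → Λ,
      Tendsto (fun n => diam (Set.range (seqComp w σ n))) atTop (𝓝 0)) :
    ∃ Γ : (ℕ → Λ) → X, ∀ ε > (0 : ℝ), ∃ n₀ : ℕ, ∀ n ≥ n₀, ∀ σ : ℕ → Λ, ∀ x : X,
      dist (seqComp w σ n x) (Γ σ) < ε := by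
  have hu := seqComp_uniform_aux w hw hyp
  obtain ⟨x₀⟩ := ‹Nonempty X›
  have hlim : ∀ σ : ℕ → Λ, ∃ z, Tendsto (fun n => seqComp w σ n x₀) atTop (𝓝 z) := by
    intro σ
    apply cauchySeq_tendsto_of_complete
    rw [Metric.cauchySeq_iff]
    intro ε hε
    obtain ⟨N, hN⟩ := hu ε hε
    refine ⟨N, fun m hm n hn => ?_⟩
    obtain ⟨x', hx⟩ := seqComp_factor_aux w σ N m hm x₀
    obtain ⟨y', hy⟩ := seqComp_factor_aux w σ N n hn x₀
    rw [hx, hy]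
    exact hN σ x' y'
  choose Γ hΓ using hlim
  refine ⟨Γ, fun ε hε => ?_⟩
  obtain ⟨N, hN⟩ := hu (ε / 2) (half_pos hε)
  refine ⟨N, fun n hn σ x => ?_⟩
  refine lt_of_le_of_lt ?_ (half_lt_self hε)
  refine le_of_tendsto (tendsto_const_nhds.dist (hΓ σ)) ?_
  filter_upwards [eventually_ge_atTop N] with m hm
  obtain ⟨x', hx⟩ := seqComp_factor_aux w σ N n hn x
  obtain ⟨y', hy⟩ := seqComp_factor_aux w σ N m hm x₀
  rw [hx, hy]
  exact (hN σ x' y').le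
end

section
/- Let X be a nonempty compact metric space, Λ a compact metric space, w : Λ × X → X a weakly hyperbolic IFS, and p a Borel probability measure on Λ. Then there exists a unique Borel probability measure ν on X with T_p(ν) = ν, and T_pⁿ(μ) → ν in the weak* topology for every Borel probability measure μ on X. Moreover, if p(U) > 0 for every nonempty open set U ⊆ Λ, then the support of ν equals the global attractor K of w. -/
open Metric Set Filter Topology MeasureTheory

/-- The Hutchinson–Barnsley operator on sets: `F(A) = w(Λ × A)`. -/
def HBset {Λ X : Type*} (w : Λ → X → X) (A : Set X) : Set X :=
  (fun p : Λ × X => w p.1 p.2) '' (Set.univ ×ˢ A)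

/-- The (topological) support of a measure: the set of points all of whose
neighbourhoods have positive measure. -/
def measSupport {X : Type*} [TopologicalSpace X] [MeasurableSpace X]
    (μ : MeasureTheory.Measure X) : Set X :=
  {x : X | ∀ U : Set X, IsOpen U → x ∈ U → 0 < μ U}

open BoundedContinuousFunction

section helpers

variable {Λ X : Type*}

lemma seqComp_congr (w : Λ → X → X) (σ τ : ℕ → Λ) (n : ℕ) (h : ∀ i < n, σ i = τ i) :
    seqComp w σ n = seqComp w τ n := by
  induction n with
  | zero => rfl
  | succ n ih =>
    simp only [seqComp]
    rw [ih (fun i hi => h i (by omega)), h n (by omega)]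

lemma seqComp_update (w : Λ → X → X) (σ : ℕ → Λ) (n : ℕ) (l : Λ) (x : X) :
    seqComp w (Function.update σ n l) (n + 1) x = seqComp w σ n (w l x) := by
  simp only [seqComp, Function.comp, Function.update_self]
  rw [seqComp_congr w (Function.update σ n l) σ n]
  intro i hi
  exact Function.update_of_ne (by omega) _ _

lemma seqComp_continuous [TopologicalSpace Λ] [TopologicalSpace X] (w : Λ → X → X)
    (hw : Continuous fun p : Λ × X => w p.1 p.2) (n : ℕ) :
    Continuous fun q : (ℕ → Λ) × X => seqComp w q.1 n q.2 := by
  induction n with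
  | zero => exact continuous_snd
  | succ n ih =>
    have h1 : Continuous fun q : (ℕ → Λ) × X => w (q.1 n) q.2 :=
      hw.comp (g := fun p : Λ × X => w p.1 p.2) (f := fun q : (ℕ → Λ) × X => (q.1 n, q.2))
        (((continuous_apply n).comp continuous_fst).prodMk continuous_snd)
    exact ih.comp (continuous_fst.prodMk h1)

lemma uniform_contraction [MetricSpace Λ] [CompactSpace Λ] [MetricSpace X] [CompactSpace X]
    (w : Λ → X → X) (hw : Continuous fun p : Λ × X => w p.1 p.2)
    (hyp : ∀ σ : ℕ → Λ,
      Tendsto (fun n => diam (Set.range (seqComp w σ n))) atTop (𝓝 0))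
    (ε : ℝ) (hε : 0 < ε) :
    ∃ n, ∀ (σ : ℕ → Λ) (x y : X), dist (seqComp w σ n x) (seqComp w σ n y) < ε := by
  by_contra hcon
  push Not at hcon
  let C : ℕ → Set (ℕ → Λ) := fun n =>
    Prod.fst '' {q : (ℕ → Λ) × X × X | ε ≤ dist (seqComp w q.1 n q.2.1) (seqComp w q.1 n q.2.2)}
  have hcl : ∀ n, IsCompact (C n) := by
    intro n
    apply IsCompact.image _ continuous_fst
    apply IsClosed.isCompact
    have hc := seqComp_continuous w hw n
    exact isClosed_le continuous_const
      ((hc.comp (continuous_fst.prodMk (continuous_fst.comp continuous_snd))).dist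
        (hc.comp (continuous_fst.prodMk (continuous_snd.comp continuous_snd))))
  obtain ⟨σ, hσ⟩ := IsCompact.nonempty_iInter_of_sequence_nonempty_isCompact_isClosed C
    (by
      rintro n _ ⟨⟨σ, x, y⟩, h, rfl⟩
      exact ⟨⟨σ, w (σ n) x, w (σ n) y⟩, h, rfl⟩)
    (by
      intro n
      obtain ⟨σ, x, y, h⟩ := hcon n
      exact ⟨σ, ⟨σ, x, y⟩, h, rfl⟩) (hcl 0) (fun n => (hcl n).isClosed)
  have hev := (hyp σ).eventually (gt_mem_nhds hε)
  obtain ⟨n, hn⟩ := hev.exists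
  obtain ⟨⟨σ', x, y⟩, h, h'⟩ := mem_iInter.1 hσ n
  simp only at h'
  subst h'
  have := dist_le_diam_of_mem (isBounded_of_compactSpace (s := Set.range (seqComp w σ' n)))
    ⟨x, rfl⟩ ⟨y, rfl⟩
  simp only [mem_ofPred_eq] at h
  linarith

variable [MetricSpace Λ] [CompactSpace Λ] [MeasurableSpace Λ] [BorelSpace Λ]
    [MetricSpace X] [CompactSpace X] [MeasurableSpace X] [BorelSpace X]

lemma exists_dual (w : Λ → X → X) (hw : Continuous fun p : Λ × X => w p.1 p.2)
    (p : Measure Λ) [IsProbabilityMeasure p] :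
    ∃ P : (X →ᵇ ℝ) → (X →ᵇ ℝ), ∀ f x, P f x = ∫ l, f (w l x) ∂p := by
  have hc : ∀ f : X →ᵇ ℝ, Continuous fun x => ∫ l, f (w l x) ∂p := by
    intro f
    have := continuous_parametric_integral_of_continuous (μ := p) (f := fun x l => f (w l x))
      (f.continuous.comp (hw.comp continuous_swap)) isCompact_univ
    simpa using this
  exact ⟨fun f => mkOfCompact ⟨_, hc f⟩, fun f x => rfl⟩

lemma transfer_eq_map (w : Λ → X → X) (hw : Continuous fun p : Λ × X => w p.1 p.2)
    (p : Measure Λ) [IsProbabilityMeasure p]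
    (T : ProbabilityMeasure X → ProbabilityMeasure X)
    (hT : ∀ (μ : ProbabilityMeasure X) (B : Set X), MeasurableSet B →
      (T μ : Measure X) B = ∫⁻ l, (μ : Measure X) ((fun x => w l x) ⁻¹' B) ∂p)
    (μ : ProbabilityMeasure X) :
    (T μ : Measure X) = (p.prod (μ : Measure X)).map (fun q => w q.1 q.2) := by
  ext B hB
  rw [hT μ B hB, Measure.map_apply hw.measurable hB,
    Measure.prod_apply (hw.measurable hB)]
  rfl

lemma integral_transfer (w : Λ → X → X) (hw : Continuous fun p : Λ × X => w p.1 p.2)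
    (p : Measure Λ) [IsProbabilityMeasure p]
    (T : ProbabilityMeasure X → ProbabilityMeasure X)
    (hT : ∀ (μ : ProbabilityMeasure X) (B : Set X), MeasurableSet B →
      (T μ : Measure X) B = ∫⁻ l, (μ : Measure X) ((fun x => w l x) ⁻¹' B) ∂p)
    (P : (X →ᵇ ℝ) → (X →ᵇ ℝ)) (hP : ∀ f x, P f x = ∫ l, f (w l x) ∂p)
    (μ : ProbabilityMeasure X) (f : X →ᵇ ℝ) :
    ∫ x, f x ∂(T μ : Measure X) = ∫ x, P f x ∂(μ : Measure X) := by
  rw [transfer_eq_map w hw p T hT μ, integral_map hw.measurable.aemeasurable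
    f.continuous.aestronglyMeasurable, integral_prod_symm]
  · simp only [hP]
  · exact (f.compContinuous ⟨_, hw⟩).integrable _

lemma integral_transfer_iterate (w : Λ → X → X) (hw : Continuous fun p : Λ × X => w p.1 p.2)
    (p : Measure Λ) [IsProbabilityMeasure p]
    (T : ProbabilityMeasure X → ProbabilityMeasure X)
    (hT : ∀ (μ : ProbabilityMeasure X) (B : Set X), MeasurableSet B →
      (T μ : Measure X) B = ∫⁻ l, (μ : Measure X) ((fun x => w l x) ⁻¹' B) ∂p)
    (P : (X →ᵇ ℝ) → (X →ᵇ ℝ)) (hP : ∀ f x, P f x = ∫ l, f (w l x) ∂p) (n : ℕ) :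
    ∀ (μ : ProbabilityMeasure X) (f : X →ᵇ ℝ),
    ∫ x, f x ∂(T^[n] μ : Measure X) = ∫ x, (P^[n] f) x ∂(μ : Measure X) := by
  induction n with
  | zero => intro μ f; rfl
  | succ n ih =>
    intro μ f
    rw [Function.iterate_succ_apply' T, integral_transfer w hw p T hT P hP, ih,
      Function.iterate_succ_apply P]

lemma dual_osc (w : Λ → X → X) (hw : Continuous fun p : Λ × X => w p.1 p.2)
    (p : Measure Λ) [IsProbabilityMeasure p]
    (P : (X →ᵇ ℝ) → (X →ᵇ ℝ)) (hP : ∀ f x, P f x = ∫ l, f (w l x) ∂p)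
    (f : X →ᵇ ℝ) (ε : ℝ) (n : ℕ) :
    ∀ (x y : X), (∀ σ, |f (seqComp w σ n x) - f (seqComp w σ n y)| ≤ ε) →
      |(P^[n] f) x - (P^[n] f) y| ≤ ε := by
  have : Nonempty Λ := nonempty_of_isProbabilityMeasure p
  induction n with
  | zero => intro x y h; exact h (fun _ => Classical.arbitrary Λ)
  | succ n ih =>
    intro x y h
    have hint : ∀ x, Integrable (fun l => (P^[n] f) (w l x)) p := fun x =>
      ((P^[n] f).compContinuous ⟨fun l => w l x,
        hw.comp (continuous_id.prodMk continuous_const)⟩).integrable _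
    rw [Function.iterate_succ_apply', hP, hP, ← integral_sub (hint x) (hint y)]
    have := norm_integral_le_of_norm_le_const (μ := p) (C := ε)
      (f := fun l => (P^[n] f) (w l x) - (P^[n] f) (w l y))
      (Eventually.of_forall fun l => by
        rw [Real.norm_eq_abs]
        apply ih
        intro σ
        rw [← seqComp_update, ← seqComp_update]
        exact h _)
    simpa using this

lemma key_uniform [Nonempty X] (w : Λ → X → X) (hw : Continuous fun p : Λ × X => w p.1 p.2)
    (hyp : ∀ σ : ℕ → Λ,
      Tendsto (fun n => diam (Set.range (seqComp w σ n))) atTop (𝓝 0))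
    (p : Measure Λ) [IsProbabilityMeasure p]
    (T : ProbabilityMeasure X → ProbabilityMeasure X)
    (hT : ∀ (μ : ProbabilityMeasure X) (B : Set X), MeasurableSet B →
      (T μ : Measure X) B = ∫⁻ l, (μ : Measure X) ((fun x => w l x) ⁻¹' B) ∂p)
    (f : X →ᵇ ℝ) (ε : ℝ) (hε : 0 < ε) :
    ∃ N, ∀ n ≥ N, ∀ μ μ' : ProbabilityMeasure X,
      |∫ x, f x ∂(T^[n] μ : Measure X) - ∫ x, f x ∂(T^[n] μ' : Measure X)| < ε := by
  obtain ⟨P, hP⟩ := exists_dual w hw p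
  have huc := CompactSpace.uniformContinuous_of_continuous f.continuous
  obtain ⟨δ, hδ, hf⟩ := Metric.uniformContinuous_iff.1 huc (ε / 3) (by positivity)
  obtain ⟨N, hN⟩ := uniform_contraction w hw hyp δ hδ
  let x₀ : X := Classical.arbitrary X
  have hb : ∀ μ : ProbabilityMeasure X,
      |∫ x, f x ∂(T^[N] μ : Measure X) - (P^[N] f) x₀| ≤ ε / 3 := by
    intro μ
    rw [integral_transfer_iterate w hw p T hT P hP]
    have h1 : ∫ x, (P^[N] f) x ∂(μ : Measure X) - (P^[N] f) x₀
        = ∫ x, ((P^[N] f) x - (P^[N] f) x₀) ∂(μ : Measure X) := by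
      rw [integral_sub ((P^[N] f).integrable _) (integrable_const _)]
      simp
    rw [h1]
    have := norm_integral_le_of_norm_le_const (μ := (μ : Measure X)) (C := ε / 3)
      (f := fun x => (P^[N] f) x - (P^[N] f) x₀)
      (Eventually.of_forall fun x => by
        rw [Real.norm_eq_abs]
        apply dual_osc w hw p P hP
        intro σ
        exact (hf (hN σ x x₀)).le)
    simpa using this
  refine ⟨N, fun n hn μ μ' => ?_⟩
  obtain ⟨k, rfl⟩ := Nat.exists_eq_add_of_le hn
  rw [Function.iterate_add_apply, Function.iterate_add_apply]
  have h1 := abs_le.1 (hb (T^[k] μ))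
  have h2 := abs_le.1 (hb (T^[k] μ'))
  rw [abs_lt]
  constructor <;> linarith [h1.1, h1.2, h2.1, h2.2]

lemma HBset_iterate (w : Λ → X → X) (hw : Continuous fun p : Λ × X => w p.1 p.2)
    [Nonempty Λ] (n : ℕ) (B : Set X) (hB : B.Nonempty) (hBc : IsCompact B) :
    ((HBset w)^[n] B).Nonempty ∧ IsCompact ((HBset w)^[n] B) := by
  induction n with
  | zero => exact ⟨hB, hBc⟩
  | succ n ih =>
    rw [Function.iterate_succ_apply']
    exact ⟨(univ_nonempty.prod ih.1).image _, (isCompact_univ.prod ih.2).image hw⟩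

end helpers

/-- A weakly hyperbolic IFS on a nonempty compact metric space has a unique
invariant probability measure `ν`, which attracts all probability measures under
the transfer operator; if `p` gives positive mass to every nonempty open set,
the support of `ν` is the global attractor `K`. -/
theorem stmt_9 {Λ X : Type*} [MetricSpace Λ] [CompactSpace Λ]
    [MeasurableSpace Λ] [BorelSpace Λ]
    [MetricSpace X] [CompactSpace X] [Nonempty X] [MeasurableSpace X] [BorelSpace X]
    (w : Λ → X → X) (hw : Continuous fun p : Λ × X => w p.1 p.2)
    (hyp : ∀ σ : ℕ → Λ,
      Tendsto (fun n => diam (Set.range (seqComp w σ n))) atTop (𝓝 0))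
    (p : Measure Λ) [IsProbabilityMeasure p]
    (T : ProbabilityMeasure X → ProbabilityMeasure X)
    (hT : ∀ (μ : ProbabilityMeasure X) (B : Set X), MeasurableSet B →
      (T μ : Measure X) B = ∫⁻ l, (μ : Measure X) ((fun x => w l x) ⁻¹' B) ∂p)
    (K : Set X) (hKne : K.Nonempty) (hKc : IsCompact K)
    (hKattr : ∀ B : Set X, B.Nonempty → IsCompact B →
      Tendsto (fun n => hausdorffDist ((HBset w)^[n] B) K) atTop (𝓝 0)) :
    ∃ ν : ProbabilityMeasure X, T ν = ν ∧ (∀ ν' : ProbabilityMeasure X, T ν' = ν' → ν' = ν) ∧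
      (∀ μ : ProbabilityMeasure X, Tendsto (fun n => T^[n] μ) atTop (𝓝 ν)) ∧
      ((∀ U : Set Λ, IsOpen U → U.Nonempty → 0 < p U) →
        measSupport (ν : Measure X) = K) := by
  have hΛ : Nonempty Λ := nonempty_of_isProbabilityMeasure p
  obtain ⟨P, hP⟩ := exists_dual w hw p
  have key := key_uniform w hw hyp p T hT
  let μ₀ : ProbabilityMeasure X := ⟨Measure.dirac (Classical.arbitrary X), inferInstance⟩
  obtain ⟨ν, -, hν⟩ := isCompact_univ (X := ProbabilityMeasure X)
    (f := map (fun n => T^[n] μ₀) atTop) (by simp)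
  have hconv₀ : ∀ f : X →ᵇ ℝ, Tendsto (fun n => ∫ x, f x ∂(T^[n] μ₀ : Measure X)) atTop
      (𝓝 (∫ x, f x ∂(ν : Measure X))) := by
    intro f
    have hcauchy : CauchySeq (fun n => ∫ x, f x ∂(T^[n] μ₀ : Measure X)) := by
      rw [Metric.cauchySeq_iff']
      intro ε hε
      obtain ⟨N, hN⟩ := key f ε hε
      refine ⟨N, fun n hn => ?_⟩
      obtain ⟨k, rfl⟩ := Nat.exists_eq_add_of_le hn
      rw [Function.iterate_add_apply, Real.dist_eq]
      exact hN N le_rfl _ _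
    obtain ⟨a, ha⟩ := cauchySeq_tendsto_of_complete hcauchy
    have hcont : Continuous fun μ : ProbabilityMeasure X => ∫ x, f x ∂(μ : Measure X) :=
      continuous_iff_continuousAt.2 fun μ =>
        (ProbabilityMeasure.tendsto_iff_forall_integral_tendsto.1 tendsto_id) f
    have hcl : MapClusterPt (∫ x, f x ∂(ν : Measure X)) atTop
        (fun n => ∫ x, f x ∂(T^[n] μ₀ : Measure X)) :=
      MapClusterPt.continuousAt_comp (f := fun μ : ProbabilityMeasure X => ∫ x, f x ∂(μ : Measure X))
        hcont.continuousAt hν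
    have : ∫ x, f x ∂(ν : Measure X) = a := by
      by_contra hne
      have hd := (disjoint_nhds_nhds.2 hne)
      have h3 : (𝓝 (∫ x, f x ∂(ν : Measure X)) ⊓ 𝓝 a).NeBot :=
        NeBot.mono hcl (inf_le_inf_left _ ha)
      exact h3.ne hd.eq_bot
    rw [this]
    exact ha
  have hTν : T ν = ν := by
    apply Subtype.ext
    change (T ν : Measure X) = (ν : Measure X)
    apply ext_of_forall_integral_eq_of_IsFiniteMeasure
    intro f
    have e := integral_transfer w hw p T hT P hP ν f
    have h1 := hconv₀ (P f)
    have h2 := (tendsto_add_atTop_iff_nat 1).2 (hconv₀ f)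
    have h3 : (fun n => ∫ x, f x ∂(T^[n + 1] μ₀ : Measure X))
        = fun n => ∫ x, (P f) x ∂(T^[n] μ₀ : Measure X) := by
      funext n
      rw [Function.iterate_succ_apply', integral_transfer w hw p T hT P hP]
    rw [h3] at h2
    exact e.trans (tendsto_nhds_unique h1 h2)
  have hfix : ∀ ν' : ProbabilityMeasure X, T ν' = ν' → ∀ n, T^[n] ν' = ν' :=
    fun ν' h n => Function.iterate_fixed h n
  have hconv : ∀ μ : ProbabilityMeasure X, Tendsto (fun n => T^[n] μ) atTop (𝓝 ν) := by
    intro μ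
    rw [ProbabilityMeasure.tendsto_iff_forall_integral_tendsto]
    intro f
    rw [Metric.tendsto_atTop]
    intro ε hε
    obtain ⟨N, hN⟩ := key f ε hε
    refine ⟨N, fun n hn => ?_⟩
    have := hN n hn μ ν
    rw [hfix ν hTν n] at this
    rwa [Real.dist_eq]
  have hbdd : ∀ s : Set X, Bornology.IsBounded s := fun s => isBounded_of_compactSpace
  refine ⟨ν, hTν, ?_, hconv, ?_⟩
  · intro ν' h'
    have h := hconv ν'
    simp only [hfix ν' h'] at h
    exact tendsto_nhds_unique tendsto_const_nhds h
  · intro hp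
    have hνT : ∀ B : Set X, MeasurableSet B →
        (ν : Measure X) B = ∫⁻ l, (ν : Measure X) ((fun x => w l x) ⁻¹' B) ∂p := by
      intro B hB
      have := hT ν B hB
      rwa [hTν] at this
    have hfin : ∀ n (B : Set X), B.Nonempty → IsCompact B →
        hausdorffEDist ((HBset w)^[n] B) K ≠ ⊤ := fun n B h1 h2 =>
      hausdorffEDist_ne_top_of_nonempty_of_bounded (HBset_iterate w hw n B h1 h2).1 hKne
        (hbdd _) (hbdd _)
    apply Subset.antisymm
    · intro x hx
      by_contra hxK
      have hδ : 0 < infDist x K := (hKc.isClosed.notMem_iff_infDist_pos hKne).1 hxK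
      have hnull : ∀ n, (ν : Measure X) ((HBset w)^[n] univ)ᶜ = 0 := by
        intro n
        induction n with
        | zero => simp
        | succ n ih =>
          have hc := (HBset_iterate w hw (n + 1) univ univ_nonempty isCompact_univ).2
          rw [hνT _ hc.isClosed.measurableSet.compl]
          rw [lintegral_eq_zero_of_ae_eq_zero]
          refine Eventually.of_forall fun l => ?_
          refine measure_mono_null ?_ ih
          intro y hy hyA
          apply hy
          rw [Function.iterate_succ_apply']
          exact ⟨(l, y), ⟨mem_univ _, hyA⟩, rfl⟩
      obtain ⟨n, hn⟩ := ((hKattr univ univ_nonempty isCompact_univ).eventually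
        (gt_mem_nhds (half_pos hδ))).exists
      have hpos := hx (ball x (infDist x K / 2)) isOpen_ball (mem_ball_self (half_pos hδ))
      refine hpos.ne' (measure_mono_null ?_ (hnull n))
      intro y hy hyA
      obtain ⟨k, hk, hyk⟩ := exists_dist_lt_of_hausdorffDist_lt hyA hn
        (hfin n univ univ_nonempty isCompact_univ)
      have h1 := infDist_le_dist_of_mem (x := x) hk
      have h2 := dist_triangle x y k
      rw [mem_ball, dist_comm] at hy
      linarith
    · have hSne : ∃ s, s ∈ measSupport (ν : Measure X) := by
        by_contra hno
        have h0 : (ν : Measure X) univ = 0 := by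
          apply measure_null_of_locally_null
          intro x _
          have hx : x ∉ measSupport (ν : Measure X) := fun h => hno ⟨x, h⟩
          simp only [measSupport, mem_ofPred_eq, not_forall] at hx
          obtain ⟨U, hU, hxU, h⟩ := hx
          exact ⟨U, mem_nhdsWithin_of_mem_nhds (hU.mem_nhds hxU), by simpa using h⟩
        simp at h0
      obtain ⟨s, hs⟩ := hSne
      have hinv : ∀ l x, x ∈ measSupport (ν : Measure X) →
          w l x ∈ measSupport (ν : Measure X) := by
        intro l x hx U hU hlx
        obtain ⟨V, W, hV, hW, hlV, hxW, hVW⟩ := isOpen_prod_iff.1 (hU.preimage hw) l x hlx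
        have hWpos := hx W hW hxW
        have hVpos := hp V hV ⟨l, hlV⟩
        rw [hνT U hU.measurableSet]
        calc 0 < (ν : Measure X) W * p V := ENNReal.mul_pos hWpos.ne' hVpos.ne'
          _ = ∫⁻ _ in V, (ν : Measure X) W ∂p := by rw [setLIntegral_const]
          _ ≤ ∫⁻ l in V, (ν : Measure X) ((fun x => w l x) ⁻¹' U) ∂p := by
            apply setLIntegral_mono' hV.measurableSet
            intro l' hl'
            apply measure_mono
            intro y hy
            exact hVW (mk_mem_prod hl' hy)
          _ ≤ _ := setLIntegral_le_lintegral _ _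
      have hsub : ∀ n, (HBset w)^[n] {s} ⊆ measSupport (ν : Measure X) := by
        intro n
        induction n with
        | zero => simpa using hs
        | succ n ih =>
          rw [Function.iterate_succ_apply']
          rintro _ ⟨⟨l, y⟩, ⟨_, hy⟩, rfl⟩
          exact hinv l y (ih hy)
      intro k hk U hU hkU
      obtain ⟨ε, hε, hball⟩ := Metric.isOpen_iff.1 hU k hkU
      obtain ⟨n, hn⟩ := ((hKattr {s} (singleton_nonempty s) isCompact_singleton).eventually
        (gt_mem_nhds hε)).exists
      obtain ⟨y, hy, hyk⟩ := exists_dist_lt_of_hausdorffDist_lt' hk hn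
        (hfin n {s} (singleton_nonempty s) isCompact_singleton)
      exact hsub n hy U hU (hball hyk)
end

section
/- Let X be a nonempty complete metric space that is uniformly ε-chainable on balls for every ε > 0 and such that K(X) with the Hausdorff metric is ε-chainable for every ε > 0, let Λ be a compact metric space, let w : Λ × X → X be a weakly* hyperbolic IFS with global attractor K, and let p be a Borel probability measure on Λ. Then there exists a unique Borel probability measure ν on X with T_p(ν) = ν and supp(ν) ⊆ K; if moreover p(U) > 0 for every nonempty open U ⊆ Λ then supp(ν) = K. Furthermore, for every Borel probability measure μ on X with compact support, sup{ |∫_X f dT_pⁿ(μ) − ∫_X f dν| : f : X → ℝ, |f(x) − f(y)| ≤ d(x,y) for all x,y } → 0 as n → ∞. -/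
open Metric Set Filter Topology MeasureTheory TopologicalSpace

/-- Prepend a symbol to a sequence. -/
def consSeq {Λ : Type*} (l : Λ) (σ : ℕ → Λ) : ℕ → Λ
  | 0 => l
  | n + 1 => σ n

lemma seqComp_consSeq {Λ X : Type*} (w : Λ → X → X) (l : Λ) (σ : ℕ → Λ) (n : ℕ) (x : X) :
    seqComp w (consSeq l σ) (n + 1) x = w l (seqComp w σ n x) := by
  induction n generalizing x with
  | zero => rfl
  | succ n ih => exact ih (w (σ n) x)

lemma continuous_seqComp {Λ X : Type*} [TopologicalSpace Λ] [TopologicalSpace X]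
    (w : Λ → X → X) (hw : Continuous fun p : Λ × X => w p.1 p.2) (n : ℕ) :
    Continuous fun q : (ℕ → Λ) × X => seqComp w q.1 n q.2 := by
  induction n with
  | zero => exact continuous_snd
  | succ n ih =>
    have h2 : Continuous fun q : (ℕ → Λ) × X => (q.1, w (q.1 n) q.2) := by
      have h1 : Continuous fun q : (ℕ → Λ) × X => (q.1 n, q.2) :=
        ((continuous_apply n).comp continuous_fst).prodMk continuous_snd
      exact continuous_fst.prodMk (hw.comp h1)
    exact ih.comp h2

lemma measurable_consSeq {Λ : Type*} [MeasurableSpace Λ] :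
    Measurable fun q : Λ × (ℕ → Λ) => consSeq q.1 q.2 := by
  refine measurable_pi_lambda _ fun n => ?_
  cases n with
  | zero => exact measurable_fst
  | succ n => exact (measurable_pi_apply n).comp measurable_snd

lemma map_consSeq {Λ : Type*} [MeasurableSpace Λ] (p : Measure Λ) [IsProbabilityMeasure p] :
    (p.prod (Measure.infinitePi fun _ : ℕ => p)).map (fun q => consSeq q.1 q.2)
      = Measure.infinitePi fun _ : ℕ => p := by
  refine Measure.eq_infinitePi _ fun s t ht => ?_
  classical
  -- replace `t` by a family equal to `univ` off `s`
  set t' : ℕ → Set Λ := fun i => if i ∈ s then t i else univ with ht'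
  have mt' : ∀ i, MeasurableSet (t' i) := by
    intro i; by_cases h : i ∈ s <;> simp [ht', h, ht]
  obtain ⟨N, hN⟩ : ∃ N, ∀ i ∈ s, i < N + 1 :=
    ⟨s.sup id, fun i hi => Nat.lt_succ_of_le (Finset.le_sup (f := id) hi)⟩
  have hprod : ∏ i ∈ s, p (t i) = ∏ i ∈ Finset.range (N + 1), p (t' i) := by
    rw [← Finset.prod_subset (s₁ := s) (fun i hi => Finset.mem_range.2 (hN i hi))]
    · exact Finset.prod_congr rfl fun i hi => by simp [ht', hi]
    · intro i _ hi; simp [ht', hi]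
  have hset : (fun q : Λ × (ℕ → Λ) => consSeq q.1 q.2) ⁻¹' (Set.pi s t)
      = t' 0 ×ˢ Set.pi (Finset.range N) (fun i => t' (i + 1)) := by
    ext ⟨l, σ⟩
    simp only [mem_preimage, Set.mem_pi, mem_prod, Finset.mem_coe, Finset.mem_range]
    constructor
    · intro h
      refine ⟨?_, fun i _ => ?_⟩
      · by_cases h0 : 0 ∈ s
        · simpa [ht', h0, consSeq] using h 0 h0
        · simp [ht', h0]
      · by_cases h0 : i + 1 ∈ s
        · simpa [ht', h0, consSeq] using h (i + 1) h0
        · simp [ht', h0]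
    · rintro ⟨h0, h1⟩ i hi
      cases i with
      | zero => simpa [ht', hi, consSeq] using h0
      | succ i =>
        have := h1 i (by have := hN _ hi; omega)
        simpa [ht', hi, consSeq] using this
  rw [Measure.map_apply measurable_consSeq
    (MeasurableSet.pi (Finset.countable_toSet s) fun i _ => ht i), hset, Measure.prod_prod,
    Measure.infinitePi_pi _ (fun i _ => mt' (i + 1)), hprod, Finset.prod_range_succ', mul_comm]

section Deterministic

variable {Λ X : Type*} [MetricSpace X]

lemma unif_contract (w : Λ → X → X)
    (hball : ∀ ε > (0 : ℝ), ∀ (a : X) (r : ℝ), ∃ k : ℕ,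
      ∀ x ∈ ball a r, ∀ y ∈ ball a r, ∃ n ≤ k, ∃ c : ℕ → X,
        c 0 = x ∧ c n = y ∧ ∀ i < n, dist (c i) (c (i + 1)) < ε)
    (hyp : ∃ η > (0 : ℝ), ∀ ε > (0 : ℝ), ∃ n₀ : ℕ, ∀ n ≥ n₀, ∀ σ : ℕ → Λ, ∀ x y : X,
      dist x y < η → dist (seqComp w σ n x) (seqComp w σ n y) < ε)
    (a : X) (r ε : ℝ) (hε : 0 < ε) :
    ∃ N, ∀ n ≥ N, ∀ σ : ℕ → Λ, ∀ x ∈ ball a r, ∀ y ∈ ball a r,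
      dist (seqComp w σ n x) (seqComp w σ n y) < ε := by
  obtain ⟨η, hη, H⟩ := hyp
  obtain ⟨k, hk⟩ := hball η hη a r
  have hk1 : (0 : ℝ) < k + 1 := by positivity
  obtain ⟨N, hN⟩ := H (ε / (k + 1)) (by positivity)
  refine ⟨N, fun n hn σ x hx y hy => ?_⟩
  obtain ⟨m, hm, c, rfl, rfl, hc⟩ := hk x hx y hy
  calc dist (seqComp w σ n (c 0)) (seqComp w σ n (c m))
      ≤ ∑ i ∈ Finset.range m, dist (seqComp w σ n (c i)) (seqComp w σ n (c (i + 1))) :=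
        dist_le_range_sum_dist (fun i => seqComp w σ n (c i)) m
    _ ≤ ∑ i ∈ Finset.range m, ε / (k + 1) :=
        Finset.sum_le_sum fun i hi => (hN n hn σ _ _ (hc i (Finset.mem_range.1 hi))).le
    _ = m * (ε / (k + 1)) := by simp
    _ ≤ k * (ε / (k + 1)) := by gcongr
    _ < (k + 1) * (ε / (k + 1)) := by gcongr; linarith
    _ = ε := by field_simp

lemma HB_mem {Λ X : Type*} (w : Λ → X → X) {K : Set X} (hKinv : HBset w K = K) (l : Λ) {x : X}
    (hx : x ∈ K) : w l x ∈ K := by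
  rw [← hKinv]; exact ⟨(l, x), ⟨mem_univ _, hx⟩, rfl⟩

lemma seqComp_split {Λ X : Type*} (w : Λ → X → X) {K : Set X} (hKinv : HBset w K = K) (σ : ℕ → Λ)
    (n k : ℕ) {x : X} (hx : x ∈ K) : ∃ z ∈ K, seqComp w σ (n + k) x = seqComp w σ n z := by
  induction k generalizing x with
  | zero => exact ⟨x, hx, rfl⟩
  | succ k ih => exact ih (HB_mem w hKinv _ hx)

/-- The coding map. -/
lemma exists_coding [TopologicalSpace Λ] [CompleteSpace X] (w : Λ → X → X)
    (hw : Continuous fun p : Λ × X => w p.1 p.2)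
    (hball : ∀ ε > (0 : ℝ), ∀ (a : X) (r : ℝ), ∃ k : ℕ,
      ∀ x ∈ ball a r, ∀ y ∈ ball a r, ∃ n ≤ k, ∃ c : ℕ → X,
        c 0 = x ∧ c n = y ∧ ∀ i < n, dist (c i) (c (i + 1)) < ε)
    (hyp : ∃ η > (0 : ℝ), ∀ ε > (0 : ℝ), ∃ n₀ : ℕ, ∀ n ≥ n₀, ∀ σ : ℕ → Λ, ∀ x y : X,
      dist x y < η → dist (seqComp w σ n x) (seqComp w σ n y) < ε)
    (K : Set X) (hKne : K.Nonempty) (hKc : IsCompact K) (hKinv : HBset w K = K) :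
    ∃ π : (ℕ → Λ) → X, Continuous π ∧ (∀ σ, π σ ∈ K) ∧
      (∀ l σ, π (consSeq l σ) = w l (π σ)) ∧ (∀ x ∈ K, ∃ σ, π σ = x) ∧
      ∀ (C : Set X), Bornology.IsBounded C → ∀ ε > (0 : ℝ), ∃ N, ∀ n ≥ N, ∀ σ, ∀ x ∈ C,
        dist (seqComp w σ n x) (π σ) < ε := by
  obtain ⟨a, ha⟩ := hKne
  obtain ⟨R, hR⟩ := hKc.isBounded.subset_ball a
  have hcau : ∀ σ : ℕ → Λ, CauchySeq fun n => seqComp w σ n a := by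
    intro σ
    refine Metric.cauchySeq_iff'.2 fun ε hε => ?_
    obtain ⟨N, hN⟩ := unif_contract w hball hyp a R ε hε
    refine ⟨N, fun n hn => ?_⟩
    obtain ⟨k, rfl⟩ := Nat.exists_eq_add_of_le hn
    obtain ⟨z, hz, hz'⟩ := seqComp_split w hKinv σ N k ha
    simp only [hz']
    exact hN N le_rfl σ z (hR hz) a (hR ha)
  choose π hπ using fun σ => cauchySeq_tendsto_of_complete (hcau σ)
  have hunif : ∀ (C : Set X), Bornology.IsBounded C → ∀ ε > (0 : ℝ), ∃ N, ∀ n ≥ N, ∀ σ, ∀ x ∈ C,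
        dist (seqComp w σ n x) (π σ) < ε := by
    intro C hC ε hε
    obtain ⟨r, hr⟩ := (hKc.isBounded.union hC).subset_ball a
    obtain ⟨N, hN⟩ := unif_contract w hball hyp a r (ε / 2) (by positivity)
    refine ⟨N, fun n hn σ x hx => lt_of_le_of_lt ?_ (half_lt_self hε)⟩
    refine le_of_tendsto (tendsto_const_nhds.dist (hπ σ)) ?_
    filter_upwards [eventually_ge_atTop n] with m hm
    obtain ⟨k, rfl⟩ := Nat.exists_eq_add_of_le hm
    obtain ⟨z, hz, hz'⟩ := seqComp_split w hKinv σ n k ha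
    rw [hz']
    exact (hN n hn σ x (hr (Or.inr hx)) z (hr (Or.inl hz))).le
  have hmem : ∀ σ, π σ ∈ K := by
    intro σ
    refine hKc.isClosed.mem_of_tendsto (hπ σ) (Eventually.of_forall fun n => ?_)
    obtain ⟨z, hz, hz'⟩ := seqComp_split w hKinv σ 0 n ha
    rw [Nat.zero_add] at hz'
    rw [hz']; exact hz
  refine ⟨π, ?_, hmem, ?_, ?_, hunif⟩
  · refine continuous_of_uniform_approx_of_continuous fun u hu => ?_
    obtain ⟨ε, hε, hu⟩ := Metric.mem_uniformity_dist.1 hu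
    obtain ⟨N, hN⟩ := hunif {a} Bornology.isBounded_singleton ε hε
    refine ⟨fun σ => seqComp w σ N a,
      (continuous_seqComp w hw N).comp (continuous_id.prodMk continuous_const), fun σ => hu ?_⟩
    rw [dist_comm]; exact hN N le_rfl σ a rfl
  · intro l σ
    refine tendsto_nhds_unique ((tendsto_add_atTop_iff_nat 1).2 (hπ (consSeq l σ))) ?_
    simp only [seqComp_consSeq]
    have : Continuous (w l) := hw.comp (continuous_const.prodMk continuous_id)
    exact (this.tendsto _).comp (hπ σ)
  · intro x hx
    have hpre : ∀ y : K, ∃ (l : Λ) (z : K), w l z = y := by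
      rintro ⟨y, hy⟩
      rw [← hKinv] at hy
      obtain ⟨⟨l, z⟩, ⟨_, hz⟩, h⟩ := hy
      exact ⟨l, ⟨z, hz⟩, h⟩
    choose L Z hLZ using hpre
    let y : ℕ → K := fun n => Z^[n] ⟨x, hx⟩
    let σ : ℕ → Λ := fun n => L (y n)
    have hy : ∀ n, seqComp w σ n (y n) = x := by
      intro n
      induction n with
      | zero => rfl
      | succ n ih =>
        have h1 : (y (n + 1)) = Z (y n) := Function.iterate_succ_apply' _ _ _
        rw [h1]
        change seqComp w σ n (w (L (y n)) (Z (y n))) = x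
        rw [hLZ, ih]
    refine ⟨σ, ?_⟩
    refine eq_of_forall_dist_le fun ε hε => ?_
    obtain ⟨N, hN⟩ := hunif K hKc.isBounded ε hε
    have := hN N le_rfl σ (y N) (y N).2
    rw [hy, dist_comm] at this
    exact this.le

end Deterministic

lemma infinitePi_pos {Λ : Type*} [TopologicalSpace Λ] [MeasurableSpace Λ] [OpensMeasurableSpace Λ]
    (p : Measure Λ) [IsProbabilityMeasure p]
    (hp : ∀ U : Set Λ, IsOpen U → U.Nonempty → 0 < p U) (V : Set (ℕ → Λ)) (hV : IsOpen V)
    (hne : V.Nonempty) : 0 < (Measure.infinitePi fun _ : ℕ => p) V := by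
  obtain ⟨σ, hσ⟩ := hne
  obtain ⟨I, u, hu, hsub⟩ := isOpen_pi_iff.1 hV σ hσ
  refine lt_of_lt_of_le ?_ (measure_mono hsub)
  rw [Measure.infinitePi_pi _ fun i hi => (hu i hi).1.measurableSet]
  refine pos_iff_ne_zero.2 (Finset.prod_ne_zero_iff.2 fun i hi => ?_)
  exact (hp _ (hu i hi).1 ⟨_, (hu i hi).2⟩).ne'

/-- Invariant measures for weakly* hyperbolic IFS on complete, suitably
chainable metric spaces: existence and uniqueness of an invariant probability
measure supported in the attractor `K`, equality of the support with `K` when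
`p` charges every nonempty open set, and convergence, in the Hutchinson metric,
of the transfer-operator iterates of every compactly supported probability
measure. -/
theorem stmt_17 {Λ X : Type*} [MetricSpace Λ] [CompactSpace Λ]
    [MeasurableSpace Λ] [BorelSpace Λ]
    [MetricSpace X] [CompleteSpace X] [Nonempty X] [MeasurableSpace X] [BorelSpace X]
    -- `X` is uniformly ε-chainable on balls, for every ε > 0
    (hball : ∀ ε > (0 : ℝ), ∀ (a : X) (r : ℝ), ∃ k : ℕ,
      ∀ x ∈ ball a r, ∀ y ∈ ball a r, ∃ n ≤ k, ∃ c : ℕ → X,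
        c 0 = x ∧ c n = y ∧ ∀ i < n, dist (c i) (c (i + 1)) < ε)
    -- the hyperspace of nonempty compact subsets of `X` is ε-chainable, for every ε > 0
    (hchain : ∀ ε > (0 : ℝ), ∀ A B : NonemptyCompacts X,
      ∃ (n : ℕ) (c : ℕ → NonemptyCompacts X), c 0 = A ∧ c n = B ∧
        ∀ i < n, dist (c i) (c (i + 1)) < ε)
    (w : Λ → X → X) (hw : Continuous fun p : Λ × X => w p.1 p.2)
    -- `w` is weakly* hyperbolic
    (hyp : ∃ η > (0 : ℝ), ∀ ε > (0 : ℝ), ∃ n₀ : ℕ, ∀ n ≥ n₀, ∀ σ : ℕ → Λ, ∀ x y : X,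
      dist x y < η → dist (seqComp w σ n x) (seqComp w σ n y) < ε)
    -- `K` is the global attractor of `w`
    (K : Set X) (hKne : K.Nonempty) (hKc : IsCompact K) (hKinv : HBset w K = K)
    (hKattr : ∀ B : Set X, B.Nonempty → IsCompact B →
      Tendsto (fun n => hausdorffDist ((HBset w)^[n] B) K) atTop (𝓝 0))
    (p : Measure Λ) [IsProbabilityMeasure p]
    (T : ProbabilityMeasure X → ProbabilityMeasure X)
    (hT : ∀ (μ : ProbabilityMeasure X) (B : Set X), MeasurableSet B →
      (T μ : Measure X) B = ∫⁻ l, (μ : Measure X) ((fun x => w l x) ⁻¹' B) ∂p) :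
    ∃ ν : ProbabilityMeasure X,
      (T ν = ν ∧ measSupport (ν : Measure X) ⊆ K) ∧
      (∀ ν' : ProbabilityMeasure X,
        T ν' = ν' → measSupport (ν' : Measure X) ⊆ K → ν' = ν) ∧
      ((∀ U : Set Λ, IsOpen U → U.Nonempty → 0 < p U) →
        measSupport (ν : Measure X) = K) ∧
      (∀ μ : ProbabilityMeasure X,
        (∃ C : Set X, IsCompact C ∧ (μ : Measure X) C = 1) →
        ∀ ε > (0 : ℝ), ∃ N : ℕ, ∀ n ≥ N, ∀ f : X → ℝ, LipschitzWith 1 f →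
          |(∫ y, f y ∂((T^[n] μ : ProbabilityMeasure X) : Measure X)) -
              ∫ y, f y ∂(ν : Measure X)| < ε) := by
  have : SecondCountableTopology Λ := UniformSpace.secondCountable_of_separable Λ
  obtain ⟨π, hπc, hπK, hπcons, hπsurj, hπunif⟩ :=
    exists_coding w hw hball hyp K hKne hKc hKinv
  set P : Measure (ℕ → Λ) := Measure.infinitePi fun _ : ℕ => p with hP
  have hwm : Measurable fun q : Λ × X => w q.1 q.2 := hw.measurable
  have hSm : ∀ n, Measurable fun q : (ℕ → Λ) × X => seqComp w q.1 n q.2 :=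
    fun n => (continuous_seqComp w hw n).measurable
  have hπm : Measurable π := hπc.measurable
  have hπf : Measurable fun q : (ℕ → Λ) × X => π q.1 := hπm.comp measurable_fst
  have hTmap : ∀ μ : ProbabilityMeasure X,
      (T μ : Measure X) = (p.prod (μ : Measure X)).map (fun q => w q.1 q.2) := by
    intro μ
    ext B hB
    rw [hT μ B hB, Measure.map_apply hwm hB, Measure.prod_apply (hwm hB)]
    rfl
  have hcons : (p.prod P).map (fun q => consSeq q.1 q.2) = P := map_consSeq p
  have hTn : ∀ (μ : ProbabilityMeasure X) (n : ℕ),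
      ((T^[n] μ : ProbabilityMeasure X) : Measure X)
        = (P.prod (μ : Measure X)).map (fun q => seqComp w q.1 n q.2) := by
    intro μ n
    induction n with
    | zero =>
      change (μ : Measure X) = (P.prod (μ : Measure X)).map Prod.snd
      rw [Measure.map_snd_prod]; simp
    | succ n ih =>
      rw [Function.iterate_succ_apply', hTmap, ih]
      conv_rhs => rw [← hcons]
      conv_rhs => rw [← Measure.map_id (μ := (μ : Measure X))]
      rw [← Measure.map_id (μ := p), Measure.map_prod_map _ _ measurable_id (hSm n),
        Measure.map_map hwm (measurable_id.prodMap (hSm n)), Measure.map_id,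
        Measure.map_prod_map _ _ measurable_consSeq measurable_id,
        Measure.map_map (hSm (n + 1)) (measurable_consSeq.prodMap measurable_id),
        ← Measure.prodAssoc_prod,
        Measure.map_map (hwm.comp (measurable_id.prodMap (hSm n)))
          MeasurableEquiv.prodAssoc.measurable]
      congr 1
      funext q
      exact (seqComp_consSeq w q.1.1 q.1.2 n q.2).symm
  let ν : ProbabilityMeasure X := ⟨P.map π, Measure.isProbabilityMeasure_map hπm.aemeasurable⟩
  have hν : (ν : Measure X) = P.map π := rfl
  have hνfst : ∀ μ : ProbabilityMeasure X,
      (ν : Measure X) = (P.prod (μ : Measure X)).map (fun q => π q.1) := by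
    intro μ
    have : (P.prod (μ : Measure X)).map Prod.fst = P := by
      rw [Measure.map_fst_prod]; simp
    rw [hν]
    conv_lhs => rw [← this]
    rw [Measure.map_map hπm measurable_fst]
    rfl
  have hsupp : measSupport (ν : Measure X) ⊆ K := by
    intro x hx
    by_contra hxK
    have h1 := hx Kᶜ hKc.isClosed.isOpen_compl hxK
    rw [hν, Measure.map_apply hπm hKc.isClosed.isOpen_compl.measurableSet] at h1
    have : π ⁻¹' Kᶜ = ∅ := by
      ext σ; simp [hπK σ]
    simp [this] at h1
  refine ⟨ν, ⟨?_, hsupp⟩, ?_, ?_, ?_⟩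
  · apply Subtype.ext
    change (T ν : Measure X) = (ν : Measure X)
    rw [hTmap, hν]
    conv_rhs => rw [← hcons]
    rw [Measure.map_map hπm measurable_consSeq]
    conv_lhs => rw [← Measure.map_id (μ := p)]
    rw [Measure.map_prod_map _ _ measurable_id hπm,
      Measure.map_map hwm (measurable_id.prodMap hπm)]
    congr 1
    funext q
    exact (hπcons q.1 q.2).symm
  · intro ν' hν' _
    apply Subtype.ext
    change (ν' : Measure X) = (ν : Measure X)
    refine ext_of_forall_integral_eq_of_IsFiniteMeasure fun f => ?_
    have hfix : ∀ n, T^[n] ν' = ν' := fun n => Function.iterate_fixed hν' n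
    have hint : ∀ n, ∫ x, f x ∂(ν' : Measure X)
        = ∫ q, f (seqComp w q.1 n q.2) ∂(P.prod (ν' : Measure X)) := by
      intro n
      have h := hTn ν' n
      rw [hfix] at h
      conv_lhs => rw [h]
      rw [integral_map (hSm n).aemeasurable f.continuous.measurable.aestronglyMeasurable]
    rw [hνfst ν', integral_map hπf.aemeasurable
      f.continuous.measurable.aestronglyMeasurable]
    have hlim : Tendsto (fun n : ℕ => ∫ q, f (seqComp w q.1 n q.2) ∂(P.prod (ν' : Measure X)))
        atTop (𝓝 (∫ q, f (π q.1) ∂(P.prod (ν' : Measure X)))) := by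
      refine tendsto_integral_of_dominated_convergence (fun _ => ‖f‖)
        (fun n => (f.continuous.measurable.comp (hSm n)).aestronglyMeasurable)
        (integrable_const _) (fun n => Eventually.of_forall fun q => f.norm_coe_le_norm _)
        (Eventually.of_forall fun q => (f.continuous.tendsto _).comp ?_)
      refine Metric.tendsto_atTop.2 fun ε hε => ?_
      obtain ⟨N, hN⟩ := hπunif {q.2} Bornology.isBounded_singleton ε hε
      exact ⟨N, fun n hn => hN n hn q.1 q.2 rfl⟩
    simp only [← hint] at hlim
    exact tendsto_nhds_unique tendsto_const_nhds hlim
  · intro hp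
    refine hsupp.antisymm fun x hx U hU hxU => ?_
    obtain ⟨σ, rfl⟩ := hπsurj x hx
    rw [hν, Measure.map_apply hπm hU.measurableSet]
    exact infinitePi_pos p hp _ (hU.preimage hπc) ⟨σ, hxU⟩
  · rintro μ ⟨C, hC, hμC⟩ ε hε
    obtain ⟨a, ha⟩ := hKne
    obtain ⟨R, hR⟩ := hKc.isBounded.subset_ball a
    obtain ⟨N, hN⟩ := hπunif C hC.isBounded (ε / 2) (by positivity)
    refine ⟨N, fun n hn f hf => ?_⟩
    have hfm : Measurable f := hf.continuous.measurable
    rw [hνfst μ, hTn μ n, integral_map (hSm n).aemeasurable hfm.aestronglyMeasurable,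
      integral_map hπf.aemeasurable hfm.aestronglyMeasurable]
    have hae : ∀ᵐ x ∂(μ : Measure X), x ∈ C :=
      (prob_compl_eq_zero_iff hC.isClosed.measurableSet).2 hμC
    have hae2 : ∀ᵐ q ∂(P.prod (μ : Measure X)), q.2 ∈ C :=
      Measure.quasiMeasurePreserving_snd.ae hae
    have hclose : ∀ᵐ q ∂(P.prod (μ : Measure X)),
        ‖f (seqComp w q.1 n q.2) - f (π q.1)‖ ≤ ε / 2 := by
      filter_upwards [hae2] with q hq
      have h1 := hf.dist_le_mul (seqComp w q.1 n q.2) (π q.1)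
      have h2 := hN n hn q.1 q.2 hq
      rw [Real.dist_eq] at h1
      rw [Real.norm_eq_abs]
      simp only [NNReal.coe_one, one_mul] at h1
      linarith
    have hi2 : Integrable (fun q : (ℕ → Λ) × X => f (π q.1)) (P.prod (μ : Measure X)) := by
      refine Integrable.of_bound
        (hfm.comp (hπm.comp measurable_fst)).aestronglyMeasurable (|f a| + R)
        (Eventually.of_forall fun q => ?_)
      have h1 := hf.dist_le_mul (π q.1) a
      have h2 : dist (π q.1) a < R := hR (hπK q.1)
      rw [Real.dist_eq] at h1
      simp only [NNReal.coe_one, one_mul] at h1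
      have h3 := abs_sub_abs_le_abs_sub (f (π q.1)) (f a)
      rw [Real.norm_eq_abs]
      linarith
    have hid : Integrable (fun q : (ℕ → Λ) × X => f (seqComp w q.1 n q.2) - f (π q.1))
        (P.prod (μ : Measure X)) :=
      Integrable.of_bound ((hfm.comp (hSm n)).sub
        (hfm.comp (hπm.comp measurable_fst))).aestronglyMeasurable _ hclose
    have hi1 : Integrable (fun q : (ℕ → Λ) × X => f (seqComp w q.1 n q.2))
        (P.prod (μ : Measure X)) := by
      refine (hid.add hi2).congr (Eventually.of_forall fun q => ?_)
      exact sub_add_cancel _ _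
    rw [← integral_sub hi1 hi2]
    have := norm_integral_le_of_norm_le_const hclose
    rw [Real.norm_eq_abs] at this
    simp at this
    linarith
end
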